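/- arXiv:1107.0960 — 2 statements merged into one kernel-verified Lean document; each statement's English description precedes it below -/
import Mathlib

section
/- Let g: ℝ → ℝ be an even Schwartz function and let m ≥ 1 be an odd integer. Then ∫_ℝ g^{(m)}(τ) τ^{−1} dτ = (i^{m+1}/2) ∫_ℝ t^m ĝ(t) sgn(t) dt, where ĝ(t) = ∫_ℝ g(τ) e^{−itτ} dτ. (Both integrals converge absolutely: g^{(m)} is odd, so g^{(m)}(τ)/τ extends continuously to τ = 0, and i^{m+1} is real since m is odd.) -/
open MeasureTheory Real

/-- Fourier transform with the convention `ĝ(t) = ∫ g(τ) e^{-itτ} dτ`. -/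
noncomputable def fourierTr (g : ℝ → ℝ) (t : ℝ) : ℂ :=
  ∫ τ : ℝ, (g τ : ℂ) * Complex.exp (-Complex.I * t * τ)

/-!
Dividing `f` by the variable amounts to integrating its Fourier transform: if `k x = f x / x`, then
`d/dt k̂(t) = -i f̂(t)`. By the Riemann–Lebesgue lemma `k̂` vanishes at `±∞`, so integrating
`sgn(t) dk̂/dt` over the two half-lines gives `-2 k̂(0) = -2 ∫ k`, that is,
`∫ f x / x = (i / 2) ∫ f̂(t) sgn t`. For `f = g^{(m)}` one has `f̂(t) = (i t) ^ m ĝ(t)`.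

With Mathlib's normalisation, the transform `f̂(t) = ∫ f(x) e^{-itx} dx` is `𝓕 f (t / (2 * π))`.
-/

open Set Filter Topology Asymptotics
open scoped FourierTransform SchwartzMap

theorem integrable_inv_smul {E : Type*} [NormedAddCommGroup E] [NormedSpace ℝ E] {f : ℝ → E}
    (hf : Integrable f) (hf₀ : f =O[𝓝 0] fun x : ℝ => x) :
    Integrable fun x : ℝ => x⁻¹ • f x := by
  obtain ⟨C, hC, hfC⟩ := hf₀.exists_pos
  obtain ⟨δ, hδ, hball⟩ := Metric.eventually_nhds_iff_ball.1 hfC.bound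
  have hnear : Integrable ((Metric.ball (0 : ℝ) δ).indicator fun _ => C) :=
    (integrable_indicator_iff measurableSet_ball).2
      (integrableOn_const measure_ball_lt_top.ne)
  refine (hnear.add (hf.norm.const_mul δ⁻¹)).mono'
    (measurable_inv.aestronglyMeasurable.smul hf.aestronglyMeasurable)
    (Eventually.of_forall fun x => ?_)
  rw [norm_smul, norm_inv, Pi.add_apply]
  by_cases hx : x ∈ Metric.ball 0 δ
  · have hbound : ‖x‖⁻¹ * ‖f x‖ ≤ C :=
      inv_mul_le_of_le_mul₀ (norm_nonneg x) hC.le (mul_comm C ‖x‖ ▸ hball x hx)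
    rw [indicator_of_mem hx]
    exact hbound.trans (le_add_of_nonneg_right (by positivity))
  · have hδx : δ ≤ ‖x‖ := by simpa using hx
    rw [indicator_of_notMem hx, zero_add]
    gcongr

theorem smul_inv_smul_ae_eq {α : Type*} [MulAction ℝ α] (f : ℝ → α) :
    (fun x : ℝ => x • x⁻¹ • f x) =ᵐ[volume] f := by
  filter_upwards [Measure.ae_ne volume 0] with x hx
  exact smul_inv_smul₀ hx (f x)

section Sign

variable {E : Type*} [NormedAddCommGroup E] [NormedSpace ℝ E]

theorem integral_sign_smul {f : ℝ → E} (hf : Integrable f) :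
    ∫ x, Real.sign x • f x = (∫ x in Ioi 0, f x) - ∫ x in Iio 0, f x := by
  have hpos : EqOn (fun x => Real.sign x • f x) f (Ioi 0) := fun x hx => by
    simp only [Real.sign_of_pos hx, one_smul]
  have hneg : EqOn (fun x => Real.sign x • f x) (-f) (Iio 0) := fun x hx => by
    simp only [Real.sign_of_neg hx, neg_one_smul, Pi.neg_apply]
  have hint_pos : IntegrableOn (fun x => Real.sign x • f x) (Ici 0) := by
    rw [integrableOn_Ici_iff_integrableOn_Ioi]
    exact hf.integrableOn.congr_fun hpos.symm measurableSet_Ioi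
  have hint_neg : IntegrableOn (fun x => Real.sign x • f x) (Iio 0) :=
    hf.neg.integrableOn.congr_fun hneg.symm measurableSet_Iio
  rw [← intervalIntegral.integral_Iio_add_Ici hint_neg hint_pos, integral_Ici_eq_integral_Ioi,
    setIntegral_congr_fun measurableSet_Ioi hpos, setIntegral_congr_fun measurableSet_Iio hneg,
    integral_neg', neg_add_eq_sub]

theorem integral_sign_smul_of_hasDerivAt [CompleteSpace E] {F F' : ℝ → E}
    (hF : ∀ x, HasDerivAt F (F' x) x) (hF' : Integrable F')
    (hF₀ : Tendsto F (cocompact ℝ) (𝓝 0)) :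
    ∫ x, Real.sign x • F' x = (-2 : ℝ) • F 0 := by
  have hpos : ∫ x in Ioi 0, F' x = 0 - F 0 :=
    integral_Ioi_of_hasDerivAt_of_tendsto' (fun x _ => hF x) hF'.integrableOn
      (hF₀.mono_left atTop_le_cocompact)
  have hneg : ∫ x in Iio 0, F' x = F 0 - 0 := by
    rw [← integral_Iic_eq_integral_Iio]
    exact integral_Iic_of_hasDerivAt_of_tendsto' (fun x _ => hF x) hF'.integrableOn
      (hF₀.mono_left atBot_le_cocompact)
  rw [integral_sign_smul hF', hpos, hneg]
  module

end Sign

section Fourier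

variable {E : Type*} [NormedAddCommGroup E] [NormedSpace ℂ E] {f : ℝ → E}

theorem hasDerivAt_fourier_inv_smul (hf : Integrable f) (hdiv : Integrable fun x : ℝ => x⁻¹ • f x)
    (t : ℝ) :
    HasDerivAt (fun t : ℝ => 𝓕 (fun x : ℝ => x⁻¹ • f x) (t / (2 * π)))
      (-Complex.I • 𝓕 f (t / (2 * π))) t := by
  have hmul : 𝓕 (fun x : ℝ => (-2 * π * Complex.I * x) • x⁻¹ • f x) (t / (2 * π)) =
      (-2 * π * Complex.I) • 𝓕 f (t / (2 * π)) := by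
    rw [Real.fourier_real_eq, Real.fourier_real_eq, ← integral_smul]
    refine integral_congr_ae ?_
    filter_upwards [smul_inv_smul_ae_eq f] with x hx
    rw [mul_smul, Complex.coe_smul, hx, smul_comm]
  have hderiv := (Real.hasDerivAt_fourier hdiv (hf.congr (smul_inv_smul_ae_eq f).symm)
    (t / (2 * π))).scomp t ((hasDerivAt_id t).div_const (2 * π))
  rw [hmul, ← Complex.coe_smul, smul_smul] at hderiv
  have hscale : ((1 / (2 * π) : ℝ) : ℂ) * (-2 * π * Complex.I) = -Complex.I := by
    push_cast
    field_simp
  rwa [hscale] at hderiv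

theorem integral_inv_smul_eq_integral_sign_smul_fourier [CompleteSpace E] (hf : Integrable f)
    (hdiv : Integrable fun x : ℝ => x⁻¹ • f x)
    (hF : Integrable fun t : ℝ => 𝓕 f (t / (2 * π))) :
    ∫ x : ℝ, x⁻¹ • f x = (Complex.I / 2) • ∫ t : ℝ, Real.sign t • 𝓕 f (t / (2 * π)) := by
  have hlim : Tendsto (fun t : ℝ => 𝓕 (fun x : ℝ => x⁻¹ • f x) (t / (2 * π))) (cocompact ℝ)
      (𝓝 0) :=
    (Real.zero_at_infty_fourier _).comp
      (Homeomorph.mulRight₀ (2 * π)⁻¹ (by positivity)).isClosedEmbedding.tendsto_cocompact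
  have hsign := integral_sign_smul_of_hasDerivAt (hasDerivAt_fourier_inv_smul hf hdiv)
    (hF.smul (-Complex.I)) hlim
  have hzero : 𝓕 (fun x : ℝ => x⁻¹ • f x) (0 / (2 * π)) = ∫ x : ℝ, x⁻¹ • f x := by
    simp [Real.fourier_real_eq]
  rw [hzero] at hsign
  simp_rw [smul_comm (Real.sign _) (-Complex.I)] at hsign
  rw [integral_smul, ← Complex.coe_smul] at hsign
  calc ∫ x : ℝ, x⁻¹ • f x
      = (-1 / 2 : ℂ) • ((-2 : ℝ) : ℂ) • ∫ x : ℝ, x⁻¹ • f x := by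
        rw [smul_smul]; norm_num
    _ = (Complex.I / 2) • ∫ t : ℝ, Real.sign t • 𝓕 f (t / (2 * π)) := by
        rw [← hsign, smul_smul]; ring_nf

theorem fourier_iteratedDeriv_div_two_pi {n : ℕ} (hf : ContDiff ℝ n f)
    (hint : ∀ k ≤ n, Integrable (iteratedDeriv k f)) (t : ℝ) :
    𝓕 (iteratedDeriv n f) (t / (2 * π)) = (Complex.I * t) ^ n • 𝓕 f (t / (2 * π)) := by
  rw [Real.fourier_iteratedDeriv (N := n) (by exact_mod_cast hf)
    (fun k hk => hint k (by exact_mod_cast hk)) le_rfl]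
  push_cast
  field_simp

theorem integral_inv_smul_iteratedDeriv [CompleteSpace E] {n : ℕ} (hf : ContDiff ℝ n f)
    (hint : ∀ k ≤ n, Integrable (iteratedDeriv k f))
    (hdiv : Integrable fun x : ℝ => x⁻¹ • iteratedDeriv n f x)
    (hF : Integrable fun t : ℝ => (t : ℂ) ^ n • 𝓕 f (t / (2 * π))) :
    ∫ x : ℝ, x⁻¹ • iteratedDeriv n f x =
      (Complex.I ^ (n + 1) / 2) • ∫ t : ℝ, Real.sign t • (t : ℂ) ^ n • 𝓕 f (t / (2 * π)) := by
  have hfourier (t : ℝ) : 𝓕 (iteratedDeriv n f) (t / (2 * π)) =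
      Complex.I ^ n • (t : ℂ) ^ n • 𝓕 f (t / (2 * π)) := by
    rw [fourier_iteratedDeriv_div_two_pi hf hint, mul_pow, mul_smul]
  have hF' : Integrable fun t : ℝ => 𝓕 (iteratedDeriv n f) (t / (2 * π)) := by
    simp_rw [hfourier]
    exact hF.smul (Complex.I ^ n)
  rw [integral_inv_smul_eq_integral_sign_smul_fourier (hint n le_rfl) hdiv hF']
  simp_rw [hfourier, smul_comm (Real.sign _) (Complex.I ^ n)]
  rw [integral_smul, smul_smul]
  ring_nf

end Fourier

theorem iteratedDeriv_clm_comp {𝕜 F G : Type*} [NontriviallyNormedField 𝕜]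
    [NormedAddCommGroup F] [NormedSpace 𝕜 F] [NormedAddCommGroup G] [NormedSpace 𝕜 G]
    (L : F →L[𝕜] G) {f : 𝕜 → F} {n : ℕ} {x : 𝕜} (hf : ContDiffAt 𝕜 n f x) :
    iteratedDeriv n (L ∘ f) x = L (iteratedDeriv n f x) := by
  rw [iteratedDeriv, L.iteratedFDeriv_comp_left hf le_rfl]
  rfl

theorem iteratedDeriv_zero_of_even {𝕜 F : Type*} [NontriviallyNormedField 𝕜]
    [NormedAddCommGroup F] [NormedSpace 𝕜 F] [IsAddTorsionFree F] {f : 𝕜 → F}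
    (hf : Function.Even f) {n : ℕ} (hn : Odd n) : iteratedDeriv n f 0 = 0 := by
  have hneg := iteratedDeriv_comp_neg n f 0
  simp only [hf _, hn.neg_one_pow, neg_zero, neg_one_smul] at hneg
  exact self_eq_neg.1 hneg

theorem fourierTr_eq_fourier (g : ℝ → ℝ) (t : ℝ) :
    fourierTr g t = 𝓕 (Complex.ofRealCLM ∘ g) (t / (2 * π)) := by
  rw [fourierTr, Real.fourier_real_eq_integral_exp_smul]
  refine integral_congr_ae (Eventually.of_forall fun x => ?_)
  simp only [Function.comp_apply, Complex.ofRealCLM_apply, smul_eq_mul]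
  rw [mul_comm]
  congr 2
  push_cast
  field_simp

section Schwartz

variable {E : Type*} [NormedAddCommGroup E] [NormedSpace ℝ E]

theorem integrable_iteratedDeriv_schwartzMap (f : 𝓢(ℝ, E)) (n : ℕ) :
    Integrable (iteratedDeriv n f) := by
  have hnorm := f.integrable_pow_mul_iteratedFDeriv volume 0 n
  simp only [pow_zero, one_mul, norm_iteratedFDeriv_eq_norm_iteratedDeriv] at hnorm
  exact (integrable_norm_iff
    ((f.smooth n).continuous_iteratedDeriv n le_rfl).aestronglyMeasurable).1 hnorm

theorem integrable_inv_smul_iteratedDeriv_schwartzMap (f : 𝓢(ℝ, E)) {n : ℕ}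
    (hzero : iteratedDeriv n f 0 = 0) : Integrable fun x : ℝ => x⁻¹ • iteratedDeriv n f x := by
  have hdiff : DifferentiableAt ℝ (iteratedDeriv n f) 0 :=
    (f.smooth (n + 1)).differentiable_iteratedDeriv n (by exact_mod_cast n.lt_succ_self) 0
  refine integrable_inv_smul (integrable_iteratedDeriv_schwartzMap f n) ?_
  simpa only [hzero, sub_zero] using hdiff.isBigO_sub

theorem integrable_pow_mul_fourierTr_schwartzMap (g : 𝓢(ℝ, ℝ)) (n : ℕ) :
    Integrable fun t : ℝ => (t : ℂ) ^ n * fourierTr g t := by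
  let G : 𝓢(ℝ, ℂ) := 𝓕 (g.postcompCLM Complex.ofRealCLM)
  have hG : Integrable fun ξ : ℝ => (ξ : ℂ) ^ n * G ξ := by
    refine (integrable_norm_iff (by fun_prop)).1 ?_
    simpa only [norm_mul, norm_pow, Complex.norm_real] using G.integrable_pow_mul volume n
  have hscaled := (hG.comp_div (R := 2 * π) (by positivity)).const_mul ((2 * π : ℂ) ^ n)
  refine hscaled.congr (Eventually.of_forall fun t => ?_)
  have hfourier : fourierTr g t = G (t / (2 * π)) := fourierTr_eq_fourier g t
  simp only [hfourier, ← mul_assoc, ← mul_pow]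
  congr 2
  push_cast
  field_simp

end Schwartz

theorem statement4_general {g : ℝ → ℝ} {m : ℕ} (hg : ContDiff ℝ m g)
    (hint : ∀ k ≤ m, Integrable (iteratedDeriv k g))
    (hdiv : Integrable fun τ : ℝ => iteratedDeriv m g τ / τ)
    (hF : Integrable fun t : ℝ => (t : ℂ) ^ m * fourierTr g t) :
    ((∫ τ : ℝ, iteratedDeriv m g τ / τ : ℝ) : ℂ) =
      (Complex.I ^ (m + 1) / 2) *
        ∫ t : ℝ, (t : ℂ) ^ m * fourierTr g t * (Real.sign t : ℂ) := by
  have hderiv {k : ℕ} (hk : k ≤ m) :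
      iteratedDeriv k (Complex.ofRealCLM ∘ g) = fun τ => ((iteratedDeriv k g τ : ℝ) : ℂ) :=
    funext fun _ =>
      iteratedDeriv_clm_comp Complex.ofRealCLM (hg.of_le (by exact_mod_cast hk)).contDiffAt
  have hdiv' : Integrable fun τ : ℝ => τ⁻¹ • iteratedDeriv m (Complex.ofRealCLM ∘ g) τ := by
    simpa [hderiv le_rfl, div_eq_inv_mul] using hdiv.ofReal (𝕜 := ℂ)
  have hmain := integral_inv_smul_iteratedDeriv (Complex.ofRealCLM.contDiff.comp hg)
    (fun k hk => hderiv hk ▸ (hint k hk).ofReal) hdiv'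
    (by simpa only [fourierTr_eq_fourier, smul_eq_mul] using hF)
  have hcast : ((∫ τ : ℝ, iteratedDeriv m g τ / τ : ℝ) : ℂ) =
      ∫ τ : ℝ, τ⁻¹ • iteratedDeriv m (Complex.ofRealCLM ∘ g) τ := by
    simp [← integral_complex_ofReal, hderiv le_rfl, div_eq_inv_mul]
  rw [hcast, hmain]
  simp only [fourierTr_eq_fourier, Complex.real_smul, smul_eq_mul,
    mul_comm (Complex.ofReal (Real.sign _))]

theorem statement4 (g : SchwartzMap ℝ ℝ) (hg : ∀ τ, g (-τ) = g τ)
    (m : ℕ) (hm : 1 ≤ m) (hmodd : Odd m) :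
    ((∫ τ : ℝ, iteratedDeriv m g τ / τ : ℝ) : ℂ) =
      (Complex.I ^ (m + 1) / 2) *
        ∫ t : ℝ, (t : ℂ) ^ m * fourierTr g t * (Real.sign t : ℂ) :=
  statement4_general (g.smooth m) (fun k _ => integrable_iteratedDeriv_schwartzMap g k)
    (by simpa only [smul_eq_mul, inv_mul_eq_div] using
      integrable_inv_smul_iteratedDeriv_schwartzMap g (iteratedDeriv_zero_of_even hg hmodd))
    (integrable_pow_mul_fourierTr_schwartzMap g m)
end

section
/- Let n ≥ 1 and let V, V₀: ℝⁿ → [0,∞) be measurable, bounded functions each satisfying a bound V(x) ≤ A exp(−B|x|^{1+ε}) for some ε, A, B > 0 (and similarly for V₀). If ∫_{ℝⁿ} V(x)^k dx = ∫_{ℝⁿ} V₀(x)^k dx for every integer k ≥ n, then vol({x : V(x) > λ}) = vol({x : V₀(x) > λ}) for every λ > 0, where vol denotes Lebesgue measure on ℝⁿ. -/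
open MeasureTheory Real

/-!
Both pushforwards `V_* vol` and `V₀_* vol` may have infinite mass at `0`, but multiplying them by
`t ^ (2 * n)` turns them into finite measures with bounded support whose moments are the integrals
of `V ^ k` and `V₀ ^ k` for `k ≥ 2 * n`. Such a measure has an entire complex moment generating
function, hence is determined by its moments. Dividing the weight out again loses only the mass at
`0`. The exponent `2 * n` makes the weight nonnegative without any sign condition on the functions.
-/

open Filter ProbabilityTheory Set
open scoped ENNReal Topology

theorem eventuallyEq_of_iteratedDeriv_eq {𝕜 E : Type*} [NontriviallyNormedField 𝕜] [CharZero 𝕜]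
    [NormedAddCommGroup E] [NormedSpace 𝕜 E] [CompleteSpace E] {f g : 𝕜 → E} {z : 𝕜}
    (hf : AnalyticAt 𝕜 f z) (hg : AnalyticAt 𝕜 g z)
    (h : ∀ k, iteratedDeriv k f z = iteratedDeriv k g z) : f =ᶠ[𝓝 z] g := by
  have order_eq_top : analyticOrderAt (f - g) z = ⊤ :=
    ENat.eq_top_iff_forall_ge.2 fun m ↦
      (natCast_le_analyticOrderAt_iff_iteratedDeriv_eq_zero (hf.sub hg)).2 fun k _ ↦ by
        rw [iteratedDeriv_sub hf.contDiffAt hg.contDiffAt, h, sub_self]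
  exact eventuallyEq_iff_sub.2 (analyticOrderAt_eq_top.1 order_eq_top)

section Moments

variable {Ω Ω' : Type*} {mΩ : MeasurableSpace Ω} {mΩ' : MeasurableSpace Ω'}
  {μ : Measure Ω} {ν : Measure Ω'} {X : Ω → ℝ} {Y : Ω' → ℝ}

theorem eqOn_complexMGF_of_integral_pow_eq (hX : 0 ∈ interior (integrableExpSet X μ))
    (hY : 0 ∈ interior (integrableExpSet Y ν)) (h : ∀ k : ℕ, ∫ ω, X ω ^ k ∂μ = ∫ ω, Y ω ^ k ∂ν) :
    EqOn (complexMGF X μ) (complexMGF Y ν)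
      (Complex.re ⁻¹' (interior (integrableExpSet X μ) ∩ interior (integrableExpSet Y ν))) := by
  have strip_preconnected := ((convex_integrableExpSet (X := X) (μ := μ)).interior.inter
    (convex_integrableExpSet (X := Y) (μ := ν)).interior).linear_preimage Complex.reLm
      |>.isPreconnected
  have hX' : (0 : ℂ).re ∈ interior (integrableExpSet X μ) := hX
  have hY' : (0 : ℂ).re ∈ interior (integrableExpSet Y ν) := hY
  refine (analyticOnNhd_complexMGF.mono fun z hz ↦ hz.1).eqOn_of_preconnected_of_eventuallyEq
    (analyticOnNhd_complexMGF.mono fun z hz ↦ hz.2) strip_preconnected ⟨hX', hY'⟩ ?_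
  refine eventuallyEq_of_iteratedDeriv_eq (analyticAt_complexMGF hX') (analyticAt_complexMGF hY')
    fun k ↦ ?_
  simp only [iteratedDeriv_complexMGF hX', iteratedDeriv_complexMGF hY', zero_mul,
    Complex.exp_zero, mul_one, ← Complex.ofReal_pow, integral_complex_ofReal, h]

theorem isFiniteMeasure_of_zero_mem_integrableExpSet (hX : 0 ∈ integrableExpSet X μ) :
    IsFiniteMeasure μ := by
  simpa [integrableExpSet, integrable_const_iff] using hX

theorem map_eq_map_of_integral_pow_eq (hX : 0 ∈ interior (integrableExpSet X μ))
    (hY : 0 ∈ interior (integrableExpSet Y ν)) (h : ∀ k : ℕ, ∫ ω, X ω ^ k ∂μ = ∫ ω, Y ω ^ k ∂ν) :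
    μ.map X = ν.map Y := by
  have := isFiniteMeasure_of_zero_mem_integrableExpSet (interior_subset hX)
  have := isFiniteMeasure_of_zero_mem_integrableExpSet (interior_subset hY)
  refine Measure.ext_of_charFun (funext fun t ↦ ?_)
  rw [← complexMGF_mul_I (aemeasurable_of_mem_interior_integrableExpSet hX),
    ← complexMGF_mul_I (aemeasurable_of_mem_interior_integrableExpSet hY)]
  exact eqOn_complexMGF_of_integral_pow_eq hX hY h (by simpa using ⟨hX, hY⟩)

theorem integrableExpSet_withDensity_ofReal_eq_univ (hX : MemLp X ∞ μ) {w : Ω → ℝ}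
    (hw : HasFiniteIntegral w μ) :
    integrableExpSet X (μ.withDensity fun ω ↦ ENNReal.ofReal (w ω)) = univ := by
  have := isFiniteMeasure_withDensity_ofReal hw
  have hac := withDensity_absolutelyContinuous μ fun ω ↦ ENNReal.ofReal (w ω)
  exact eq_univ_of_forall fun _ ↦ integrable_exp_mul_of_mem_Icc
    (hX.aestronglyMeasurable.aemeasurable.mono_ac hac)
    (hac.ae_le <| (ae_le_lpNorm_exponent_top hX).mono fun _ ↦ abs_le.1)

end Moments

theorem restrict_setOf_ne_zero_eq_of_withDensity_eq {α : Type*} {mα : MeasurableSpace α}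
    {μ ν : Measure α} {w : α → ℝ≥0∞} (hw : Measurable w) (hw_top : ∀ x, w x ≠ ∞)
    (h : μ.withDensity w = ν.withDensity w) :
    μ.restrict {x | w x ≠ 0} = ν.restrict {x | w x ≠ 0} := by
  have hs : MeasurableSet {x | w x ≠ 0} := hw (measurableSet_singleton 0).compl
  have unweight (ρ : Measure α) : ((ρ.withDensity w).restrict {x | w x ≠ 0}).withDensity
      (fun x ↦ (w x)⁻¹) = ρ.restrict {x | w x ≠ 0} := by
    rw [restrict_withDensity hs]
    exact withDensity_inv_same hw (ae_restrict_mem hs) (ae_of_all _ hw_top)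
  rw [← unweight μ, ← unweight ν, h]

theorem integral_pow_withDensity_pow (μ : Measure ℝ) {m : ℕ} (hm : Even m) (k : ℕ) :
    ∫ t, t ^ k ∂μ.withDensity (fun t ↦ ENNReal.ofReal (t ^ m)) = ∫ t, t ^ (m + k) ∂μ := by
  rw [integral_withDensity_eq_integral_toReal_smul (by fun_prop) (by simp)]
  simp only [ENNReal.toReal_ofReal (hm.pow_nonneg _), smul_eq_mul, pow_add]

theorem restrict_compl_zero_eq_of_integral_pow_eq {μ ν : Measure ℝ} {m : ℕ} (hm : Even m)
    (hμ : 0 ∈ interior (integrableExpSet id (μ.withDensity fun t ↦ ENNReal.ofReal (t ^ m))))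
    (hν : 0 ∈ interior (integrableExpSet id (ν.withDensity fun t ↦ ENNReal.ofReal (t ^ m))))
    (hmom : ∀ k, m ≤ k → ∫ t, t ^ k ∂μ = ∫ t, t ^ k ∂ν) :
    μ.restrict {0}ᶜ = ν.restrict {0}ᶜ := by
  have weighted_eq := map_eq_map_of_integral_pow_eq hμ hν fun k ↦ by
    simp only [id, integral_pow_withDensity_pow _ hm, hmom _ (Nat.le_add_right m k)]
  rw [Measure.map_id, Measure.map_id] at weighted_eq
  have restrict_eq := restrict_setOf_ne_zero_eq_of_withDensity_eq (by fun_prop)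
    (fun _ ↦ ENNReal.ofReal_ne_top) weighted_eq
  have h_subset : ({0}ᶜ : Set ℝ) ⊆ {t | ENNReal.ofReal (t ^ m) ≠ 0} := fun t ht ↦
    (ENNReal.ofReal_pos.2 (hm.pow_pos ht)).ne'
  rw [← Measure.restrict_restrict_of_subset h_subset, restrict_eq,
    Measure.restrict_restrict_of_subset h_subset]

section BoundedFunctions

variable {α : Type*} {mα : MeasurableSpace α} {μ : Measure α} {f : α → ℝ}

theorem integrable_pow_of_memLp {n : ℕ} (hf : MemLp f n μ) (hn : n ≠ 0) :
    Integrable (fun x ↦ f x ^ n) μ := by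
  refine (integrable_norm_iff (hf.aestronglyMeasurable.pow n)).1 ?_
  simpa only [Pi.pow_apply, norm_pow] using hf.integrable_norm_pow hn

theorem integrable_pow_of_memLp_top_of_le (hf : MemLp f ∞ μ) {n m : ℕ} (hnm : n ≤ m)
    (hfn : Integrable (fun x ↦ f x ^ n) μ) : Integrable (fun x ↦ f x ^ m) μ := by
  have bounded : ∀ᵐ x ∂μ, ‖f x ^ (m - n)‖ ≤ lpNorm f ∞ μ ^ (m - n) := by
    filter_upwards [ae_le_lpNorm_exponent_top hf] with x hx
    rw [norm_pow]
    gcongr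
  simpa only [Pi.pow_apply, ← pow_add, Nat.add_sub_cancel' hnm] using
    hfn.mul_bdd (hf.aestronglyMeasurable.pow (m - n)) bounded

theorem zero_mem_interior_integrableExpSet_map_withDensity_pow (hf : MemLp f ∞ μ) {m : ℕ}
    (hfm : Integrable (fun x ↦ f x ^ m) μ) :
    0 ∈ interior (integrableExpSet id
      ((μ.map f).withDensity fun t ↦ ENNReal.ofReal (t ^ m))) := by
  have hf_meas := hf.aestronglyMeasurable.aemeasurable
  have id_memLp : MemLp id ∞ (μ.map f) :=
    (memLp_map_measure_iff aestronglyMeasurable_id hf_meas).2 hf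
  have pow_integrable : Integrable (fun t : ℝ ↦ t ^ m) (μ.map f) :=
    (integrable_map_measure (by fun_prop) hf_meas).2 hfm
  simp [integrableExpSet_withDensity_ofReal_eq_univ id_memLp pow_integrable.hasFiniteIntegral]

end BoundedFunctions

theorem statement7_general {α β : Type*} {mα : MeasurableSpace α} {mβ : MeasurableSpace β}
    {μ : Measure α} {ν : Measure β} {n : ℕ} {f : α → ℝ} {g : β → ℝ}
    (hf : MemLp f ∞ μ) (hg : MemLp g ∞ ν)
    (hfn : Integrable (fun x ↦ f x ^ n) μ) (hgn : Integrable (fun y ↦ g y ^ n) ν)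
    (hmom : ∀ k : ℕ, n ≤ k → ∫ x, f x ^ k ∂μ = ∫ y, g y ^ k ∂ν)
    {s : Set ℝ} (hs : MeasurableSet s) (h0 : 0 ∉ s) : μ (f ⁻¹' s) = ν (g ⁻¹' s) := by
  have hf_meas := hf.aestronglyMeasurable.aemeasurable
  have hg_meas := hg.aestronglyMeasurable.aemeasurable
  have hn_le : n ≤ 2 * n := Nat.le_mul_of_pos_left n two_pos
  have restrict_eq : (μ.map f).restrict {0}ᶜ = (ν.map g).restrict {0}ᶜ := by
    refine restrict_compl_zero_eq_of_integral_pow_eq (even_two_mul n)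
      (zero_mem_interior_integrableExpSet_map_withDensity_pow hf
        (integrable_pow_of_memLp_top_of_le hf hn_le hfn))
      (zero_mem_interior_integrableExpSet_map_withDensity_pow hg
        (integrable_pow_of_memLp_top_of_le hg hn_le hgn))
      fun k hk ↦ ?_
    rw [integral_map hf_meas (by fun_prop), integral_map hg_meas (by fun_prop),
      hmom k (hn_le.trans hk)]
  have hs_subset : s ⊆ {0}ᶜ := subset_compl_singleton_iff.2 h0
  rw [← Measure.map_apply_of_aemeasurable hf_meas hs,
    ← Measure.map_apply_of_aemeasurable hg_meas hs,
    ← Measure.restrict_eq_self _ hs_subset, restrict_eq, Measure.restrict_eq_self _ hs_subset]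

section StretchedExponential

variable {E : Type*} [NormedAddCommGroup E] [NormedSpace ℝ E] [FiniteDimensional ℝ E]
  [MeasurableSpace E] [BorelSpace E] {μ : Measure E} [μ.IsAddHaarMeasure] {b p : ℝ}

theorem integrable_exp_neg_mul_norm_rpow (hb : 0 < b) (hp : 0 < p) :
    Integrable (fun x : E ↦ exp (-b * ‖x‖ ^ p)) μ := by
  cases subsingleton_or_nontrivial E
  · exact .of_finite
  rw [integrable_fun_norm_addHaar μ (f := fun r ↦ exp (-b * r ^ p))]
  refine (integrableOn_rpow_mul_exp_neg_mul_rpow (s := (Module.finrank ℝ E - 1 : ℕ))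
    (neg_one_lt_zero.trans_le (Nat.cast_nonneg _)) hp hb).congr_fun (fun r _ ↦ ?_) measurableSet_Ioi
  simp only [rpow_natCast, smul_eq_mul]

theorem memLp_exp_neg_mul_norm_rpow (hb : 0 < b) (hp : 0 < p) (q : ℝ≥0∞) :
    MemLp (fun x : E ↦ exp (-b * ‖x‖ ^ p)) q μ := by
  have h_meas : AEStronglyMeasurable (fun x : E ↦ exp (-b * ‖x‖ ^ p)) μ :=
    Measurable.aestronglyMeasurable (by fun_prop)
  rcases eq_or_ne q 0 with rfl | hq0
  · exact memLp_zero_iff_aestronglyMeasurable.2 h_meas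
  rcases eq_or_ne q ∞ with rfl | hq_top
  · refine memLp_top_of_bound h_meas 1 (ae_of_all _ fun x ↦ ?_)
    rw [norm_of_nonneg (exp_nonneg _), exp_le_one_iff, neg_mul, neg_nonpos]
    positivity
  · have hq : 0 < q.toReal := ENNReal.toReal_pos hq0 hq_top
    have h_pow (x : E) :
        ‖exp (-b * ‖x‖ ^ p)‖ ^ q.toReal = exp (-(q.toReal * b) * ‖x‖ ^ p) := by
      rw [norm_of_nonneg (exp_nonneg _), ← exp_mul]
      ring_nf
    refine (integrable_norm_rpow_iff h_meas hq0 hq_top).1 ?_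
    simpa only [h_pow] using integrable_exp_neg_mul_norm_rpow (mul_pos hq hb) hp

theorem memLp_of_nonneg_of_le_mul_exp {f : E → ℝ} {a : ℝ} (hf : AEStronglyMeasurable f μ)
    (hf0 : ∀ x, 0 ≤ f x) (hb : 0 < b) (hp : 0 < p) (h : ∀ x, f x ≤ a * exp (-b * ‖x‖ ^ p))
    (q : ℝ≥0∞) : MemLp f q μ :=
  ((memLp_exp_neg_mul_norm_rpow hb hp q).const_mul a).mono' hf <|
    ae_of_all _ fun x ↦ (norm_of_nonneg (hf0 x)).trans_le (h x)

end StretchedExponential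

theorem statement7 (n : ℕ) (hn : 1 ≤ n)
    (V V₀ : EuclideanSpace ℝ (Fin n) → ℝ)
    (hVmeas : Measurable V) (hV₀meas : Measurable V₀)
    (hVnn : ∀ x, 0 ≤ V x) (hV₀nn : ∀ x, 0 ≤ V₀ x)
    (hVdec : ∃ ε A B : ℝ, 0 < ε ∧ 0 < A ∧ 0 < B ∧
      ∀ x, V x ≤ A * Real.exp (-B * ‖x‖ ^ (1 + ε)))
    (hV₀dec : ∃ ε A B : ℝ, 0 < ε ∧ 0 < A ∧ 0 < B ∧
      ∀ x, V₀ x ≤ A * Real.exp (-B * ‖x‖ ^ (1 + ε)))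
    (hmom : ∀ k : ℕ, n ≤ k → ∫ x, (V x) ^ k = ∫ x, (V₀ x) ^ k) :
    ∀ lam : ℝ, 0 < lam →
      volume {x | lam < V x} = volume {x | lam < V₀ x} := by
  obtain ⟨ε, A, B, hε, -, hB, hV⟩ := hVdec
  obtain ⟨ε₀, A₀, B₀, hε₀, -, hB₀, hV₀⟩ := hV₀dec
  have hVLp := memLp_of_nonneg_of_le_mul_exp (μ := volume) hVmeas.aestronglyMeasurable hVnn hB
    (add_pos one_pos hε) hV
  have hV₀Lp := memLp_of_nonneg_of_le_mul_exp (μ := volume) hV₀meas.aestronglyMeasurable hV₀nn hB₀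
    (add_pos one_pos hε₀) hV₀
  have hn0 : n ≠ 0 := Nat.one_le_iff_ne_zero.1 hn
  exact fun lam hlam ↦ statement7_general (hVLp ∞) (hV₀Lp ∞) (integrable_pow_of_memLp (hVLp n) hn0)
    (integrable_pow_of_memLp (hV₀Lp n) hn0) hmom measurableSet_Ioi (notMem_Ioi.2 hlam.le)
end
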